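/- arXiv:1012.0023 — 2 statements merged into one kernel-verified Lean document; each statement's English description precedes it below -/
import Mathlib

section
/- Let H be an infinite subset of { 2^k : k ∈ ℕ }, and let L₂ = { a^l b^l a^m b^m a^n b^n : l, m, n ≥ 1, and (l ∈ H or m ∈ H or n ∈ H) } ∪ { a^i b^i a^j b^j : i, j ≥ 1 } over the alphabet {a, b}. Then L₂ is not 3-linear. -/
/-!
The proof is a pumping argument applied to the single family
`w = aˡ bˡ a³ b³ a³ b³` with `l ∈ H` large.  Since `3` is not a power of two, membership of such
a word in `L₂` rests on `l ∈ H` alone.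

A linear grammar has a pumping lemma with pumping near the outer ends of a word
(`exists_pumping_bound`): a derived word of length more than `K` is `u v x y z` with
`|u| + |v| ≤ K`, `v y` nonempty and all `u vⁱ x yⁱ z` derivable from the same nonterminal.  If
`w = p₁ p₂ p₃` with `pᵢ` derived from `Sᵢ`, take the first factor longer than `K`; for `l > 3 K`
its pumped piece `v` lies inside the initial block `aˡ`.

No such pumping is compatible with `L₂` (`no_pumping`).  Words of `L₂` have as many `a` as `b`
and do not contain `bababa` as a subsequence, so `y = bʲ` and `v = aʲ` with `j ≥ 1`.  As the first
two blocks must keep equal lengths, `y` lies in the first block of `b`s.  Hence `l`, `l + j` and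
`l + 2 j` all belong to `H`, but three powers of two never form an arithmetic progression.
-/

/-- The `i`-fold repetition `v^i` of a word `v`. -/
def wordPow {T : Type} (v : List T) : ℕ → List T
  | 0 => []
  | n + 1 => v ++ wordPow v n

/-- A production of a linear grammar: either `A → u` (with `u` a terminal word)
or `A → u B w` (with `u, w` terminal words and `B` a nonterminal). -/
structure LinearRule (T N : Type) where
  input : N
  output : List T ⊕ (List T × N × List T)

/-- `LinDerives rs A p` : from nonterminal `A`, the linear productions in `rs`
derive the terminal word `p`. -/
inductive LinDerives {T N : Type} (rs : List (LinearRule T N)) : N → List T → Prop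
  | terminal {A : N} {u : List T} (hr : (⟨A, Sum.inl u⟩ : LinearRule T N) ∈ rs) :
      LinDerives rs A u
  | step {A B : N} {u w p : List T}
      (hr : (⟨A, Sum.inr (u, B, w)⟩ : LinearRule T N) ∈ rs)
      (hp : LinDerives rs B p) :
      LinDerives rs A (u ++ p ++ w)

/-- A linear grammar: a type of nonterminals, a start symbol, and a
finite list of linear productions. -/
structure LinearGrammar (T : Type) where
  NT : Type
  start : NT
  rules : List (LinearRule T NT)

/-- The language generated by a linear grammar. -/
def LinearGrammar.language {T : Type} (G : LinearGrammar T) : Set (List T) :=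
  {p | LinDerives G.rules G.start p}

/-- A linear grammar is `(g/h)`-rated linear (`k = g/h`) if every production
`A → u B w` satisfies `h * |w| = g * |u|`. -/
def LinearGrammar.IsRated {T : Type} (g h : ℕ) (G : LinearGrammar T) : Prop :=
  ∀ r ∈ G.rules, ∀ u w, ∀ B : G.NT, r.output = Sum.inr (u, B, w) →
    h * w.length = g * u.length

/-- A grammar generates exactly the language `L`, up to the empty word. -/
def LinearGrammar.GeneratesModEmpty {T : Type} (G : LinearGrammar T) (L : Set (List T)) :
    Prop :=
  ∀ p : List T, p ≠ [] → (p ∈ L ↔ p ∈ G.language)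

/-- A language is linear if some linear grammar generates it, up to the empty word. -/
def IsLinearLang {T : Type} (L : Set (List T)) : Prop :=
  ∃ G : LinearGrammar T, G.GeneratesModEmpty L

/-- A language is `(g/h)`-rated linear if some `(g/h)`-rated linear grammar
generates it, up to the empty word. -/
def IsRatedLinearLang {T : Type} (g h : ℕ) (L : Set (List T)) : Prop :=
  ∃ G : LinearGrammar T, G.IsRated g h ∧ G.GeneratesModEmpty L

/-- A `k`-linear grammar: a linear grammar together with the extra production
`S → S₁S₂⋯S_k` from a start symbol `S`, where none of the `Sᵢ` (the `heads`)
occurs on the right-hand side of any other production and `S` occurs in no other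
production at all (the latter is automatic here, since the start symbol is kept
as a fresh symbol outside the type `NT` of the remaining nonterminals). -/
structure KLinearGrammar (T : Type) (k : ℕ) where
  NT : Type
  heads : Fin k → NT
  rules : List (LinearRule T NT)
  heads_not_on_rhs : ∀ r ∈ rules, ∀ u w, ∀ B : NT, r.output = Sum.inr (u, B, w) →
    ∀ i : Fin k, B ≠ heads i

/-- The language generated by a `k`-linear grammar: as the start symbol occurs
only in the production `S → S₁S₂⋯S_k`, it consists of the concatenations
`p₁p₂⋯p_k` where each `pᵢ` is derived from `Sᵢ` by the linear productions. -/
def KLinearGrammar.language {T : Type} {k : ℕ} (G : KLinearGrammar T k) : Set (List T) :=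
  {p | ∃ ps : Fin k → List T, p = (List.ofFn ps).flatten ∧
    ∀ i : Fin k, LinDerives G.rules (G.heads i) (ps i)}

/-- A language is `k`-linear if some `k`-linear grammar generates it, up to the
empty word. -/
def IsKLinearLang {T : Type} (k : ℕ) (L : Set (List T)) : Prop :=
  ∃ G : KLinearGrammar T k, ∀ p : List T, p ≠ [] → (p ∈ L ↔ p ∈ G.language)

/-- A language is metalinear if it is `k`-linear for some positive integer `k`. -/
def IsMetalinearLang {T : Type} (L : Set (List T)) : Prop :=
  ∃ k : ℕ, 0 < k ∧ IsKLinearLang k L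

/-- The language
`L₂ = {aˡ bˡ aᵐ bᵐ aⁿ bⁿ : l, m, n ≥ 1, l ∈ H or m ∈ H or n ∈ H} ∪ {aⁱ bⁱ aʲ bʲ : i, j ≥ 1}`
(Example 14), with alphabet `{a, b}` taken to be `Fin 2` (`a = 0`, `b = 1`). -/
def L2 (H : Set ℕ) : Set (List (Fin 2)) :=
  {p | (∃ l m n : ℕ, 1 ≤ l ∧ 1 ≤ m ∧ 1 ≤ n ∧ (l ∈ H ∨ m ∈ H ∨ n ∈ H) ∧
          p = List.replicate l 0 ++ List.replicate l 1 ++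
              List.replicate m 0 ++ List.replicate m 1 ++
              List.replicate n 0 ++ List.replicate n 1) ∨
       (∃ i j : ℕ, 1 ≤ i ∧ 1 ≤ j ∧
          p = List.replicate i 0 ++ List.replicate i 1 ++
              List.replicate j 0 ++ List.replicate j 1)}

/-! ### A pumping lemma for linear grammars -/

/-- Derivability in linear rules, with the number of nonterminal-to-nonterminal steps recorded. -/
inductive LinDerivesIn {T N : Type} (rs : List (LinearRule T N)) : ℕ → N → List T → Prop
  | terminal {A : N} {u : List T} (hr : (⟨A, Sum.inl u⟩ : LinearRule T N) ∈ rs) :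
      LinDerivesIn rs 0 A u
  | step {n : ℕ} {A B : N} {u w p : List T}
      (hr : (⟨A, Sum.inr (u, B, w)⟩ : LinearRule T N) ∈ rs)
      (hp : LinDerivesIn rs n B p) :
      LinDerivesIn rs (n + 1) A (u ++ p ++ w)

theorem LinDerivesIn.linDerives {T N : Type} {rs : List (LinearRule T N)} {n : ℕ} {A : N}
    {p : List T} (h : LinDerivesIn rs n A p) : LinDerives rs A p := by
  induction h with
  | terminal hr => exact .terminal hr
  | step hr _ ih => exact .step hr ih

theorem LinDerives.exists_in {T N : Type} {rs : List (LinearRule T N)} {A : N}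
    {p : List T} (h : LinDerives rs A p) : ∃ n, LinDerivesIn rs n A p := by
  induction h with
  | terminal hr => exact ⟨0, .terminal hr⟩
  | step hr _ ih => obtain ⟨n, hn⟩ := ih; exact ⟨n + 1, .step hr hn⟩

/-- The number of terminals on the right-hand side of a production. -/
def LinearRule.size {T N : Type} (r : LinearRule T N) : ℕ :=
  match r.output with
  | Sum.inl u => u.length
  | Sum.inr (u, _, w) => u.length + w.length

/-- The word `p` derived from `A` can be pumped, the first pumped piece lying within its first
`K` letters. -/
def Pumpable {T N : Type} (rs : List (LinearRule T N)) (K : ℕ) (A : N) (p : List T) : Prop :=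
  ∃ u v x y z : List T, u.length + v.length ≤ K ∧ v ++ y ≠ [] ∧ p = u ++ v ++ x ++ y ++ z ∧
    ∀ i, LinDerives rs A (u ++ wordPow v i ++ x ++ wordPow y i ++ z)

theorem wordPow_succ_right {T : Type} (v : List T) (i : ℕ) :
    wordPow v (i + 1) = wordPow v i ++ v := by
  induction i with
  | zero => simp [wordPow]
  | succ n ih =>
    rw [wordPow, ih, ← List.append_assoc, ← ih]
    simp [wordPow]

/-- Follow a derivation from its root as long as it visits pairwise distinct nonterminals of `S`.
Either it ends (and the word is short), or it leaves `S`, or it closes a loop.  A loop producing a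
nonempty context can be pumped, and a loop producing an empty one can be cut out of the
derivation. -/
theorem pumping_aux {T N : Type} [DecidableEq N] (rs : List (LinearRule T N)) (C : ℕ)
    (hC : ∀ r ∈ rs, r.size ≤ C) (k : ℕ) :
    ∀ (S : Finset N), S.card = k → ∀ (n : ℕ) (A : N) (p : List T), LinDerivesIn rs n A p →
      p.length ≤ C * (k + 1) ∨
      (∃ (B : N) (u x z : List T) (m : ℕ), B ∉ S ∧ u.length ≤ C * k ∧ p = u ++ x ++ z ∧
        m ≤ n ∧ LinDerivesIn rs m B x ∧
        ∀ q, LinDerives rs B q → LinDerives rs A (u ++ q ++ z)) ∨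
      Pumpable rs (C * (k + 1)) A p ∨
      ∃ m < n, LinDerivesIn rs m A p := by
  induction k with
  | zero =>
    intro S hS n A p h
    rw [Finset.card_eq_zero] at hS
    subst hS
    exact .inr (.inl ⟨A, [], p, [], n, by simp, by simp, by simp, le_rfl, h, by simp⟩)
  | succ k ih =>
    intro S hS n A p h
    by_cases hA : A ∈ S
    swap
    · exact .inr (.inl ⟨A, [], p, [], n, hA, by simp, by simp, le_rfl, h, by simp⟩)
    have hmul : C * (k + 1 + 1) = C * (k + 1) + C := by ring
    cases h with
    | terminal hr =>
      left
      have := hC _ hr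
      simp only [LinearRule.size] at this
      omega
    | @step n _ B α β q hr hq =>
      have hsz := hC _ hr
      simp only [LinearRule.size] at hsz
      rcases ih (S.erase A) (by rw [Finset.card_erase_of_mem hA, hS]; rfl) n B q hq with
        h1 | ⟨B', u, x, z, m, hB', hu, rfl, hm, hx, hctx⟩ |
          ⟨u, v, x, y, z, huv, hvy, rfl, hp⟩ | ⟨m, hm, hq'⟩
      · left
        simp only [List.length_append]
        omega
      · have hctx' : ∀ q, LinDerives rs B' q →
            LinDerives rs A ((α ++ u) ++ q ++ (z ++ β)) := fun q hq' => by
          simpa using LinDerives.step hr (hctx q hq')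
        have hmul' : C * (k + 1) = C * k + C := by ring
        by_cases hBA : B' = A
        · subst hBA
          by_cases hne : (α ++ u) ++ (z ++ β) = []
          · refine .inr (.inr (.inr ⟨m, by omega, ?_⟩))
            simp only [List.append_eq_nil_iff] at hne
            obtain ⟨⟨rfl, rfl⟩, rfl, rfl⟩ := hne
            simpa using hx
          · refine .inr (.inr (.inl ⟨[], α ++ u, x, z ++ β, [], ?_, hne, by simp, ?_⟩))
            · simp only [List.length_append, List.length_nil]
              omega
            · intro i
              induction i with
              | zero => simpa [wordPow] using hx.linDerives
              | succ i ihi =>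
                have := hctx' _ ihi
                rw [wordPow_succ_right (z ++ β)]
                simpa [wordPow] using this
        · refine .inr (.inl ⟨B', α ++ u, x, z ++ β, m, ?_, ?_, by simp, by omega, hx, hctx'⟩)
          · intro hmem
            exact hB' (Finset.mem_erase.2 ⟨hBA, hmem⟩)
          · simp only [List.length_append]
            omega
      · refine .inr (.inr (.inl ⟨α ++ u, v, x, y, z ++ β, ?_, hvy, by simp, ?_⟩))
        · simp only [List.length_append]
          omega
        · intro i
          simpa using LinDerives.step hr (hp i)
      · exact .inr (.inr (.inr ⟨m + 1, by omega, .step hr hq'⟩))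

theorem exists_pumping_bound {T N : Type} (rs : List (LinearRule T N)) :
    ∃ K : ℕ, ∀ (A : N) (p : List T), LinDerives rs A p → K < p.length → Pumpable rs K A p := by
  classical
  have hC : ∀ r ∈ rs, r.size ≤ (rs.map LinearRule.size).sum := fun r hr =>
    List.le_sum_of_mem (List.mem_map_of_mem hr)
  set C := (rs.map LinearRule.size).sum
  set S : Finset N := (rs.map LinearRule.input).toFinset with hS
  refine ⟨C * (S.card + 1), fun A p h hlen => ?_⟩
  obtain ⟨n, hn⟩ := h.exists_in
  induction n using Nat.strong_induction_on with
  | _ n ih =>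
    rcases pumping_aux rs C hC S.card S rfl n A p hn with
      h1 | ⟨B, u, x, z, m, hB, -, -, -, hx, -⟩ | h1 | ⟨m, hm, h1⟩
    · omega
    · -- every nonterminal deriving something is the left-hand side of a rule
      exfalso
      apply hB
      rw [hS, List.mem_toFinset, List.mem_map]
      cases hx with
      | terminal hr => exact ⟨_, hr, rfl⟩
      | step hr _ => exact ⟨_, hr, rfl⟩
    · exact h1
    · exact ih m hm h1

/-! ### Words of `L₂` -/

/-- The word `a³ b³ a³ b³`. -/
def tailWord : List (Fin 2) :=
  List.replicate 3 0 ++ List.replicate 3 1 ++ List.replicate 3 0 ++ List.replicate 3 1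

/-- The length of a maximal run is determined by the word. -/
theorem run_inj {T : Type} {x y y' : T} (hy : x ≠ y) (hy' : x ≠ y') {s s' : List T} :
    ∀ {p q : ℕ}, List.replicate p x ++ y :: s = List.replicate q x ++ y' :: s' →
      p = q ∧ y :: s = y' :: s'
  | 0, 0, h => by simpa using h
  | 0, q + 1, h => by simp [List.replicate_succ] at h; exact absurd h.1.symm hy
  | p + 1, 0, h => by simp [List.replicate_succ] at h; exact absurd h.1 hy'
  | p + 1, q + 1, h => by
    simp only [List.replicate_succ, List.cons_append, List.cons.injEq, true_and] at h
    have := run_inj hy hy' h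
    exact ⟨by omega, this.2⟩

theorem sublist_strip {T : Type} {x y : T} (hxy : x ≠ y) {s t : List T} (n : ℕ)
    (h : (x :: s).Sublist (List.replicate n y ++ t)) : (x :: s).Sublist t := by
  induction n with
  | zero => simpa using h
  | succ n ih =>
    rw [List.replicate_succ, List.cons_append] at h
    cases h with
    | cons _ h => exact ih h
    | cons_cons _ h => exact absurd rfl hxy

theorem L2_count {H : Set ℕ} {p : List (Fin 2)} (h : p ∈ L2 H) : p.count 0 = p.count 1 := by
  rcases h with ⟨l, m, n, -, -, -, -, rfl⟩ | ⟨i, j, -, -, rfl⟩ <;>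
    simp [List.count_replicate]

theorem L2_not_sublist {H : Set ℕ} {p : List (Fin 2)} (h : p ∈ L2 H) :
    ¬ [1, 0, 1, 0, 1, 0].Sublist p := by
  intro hs
  have h01 : (0 : Fin 2) ≠ 1 := by decide
  rcases h with ⟨l, m, n, -, -, -, -, rfl⟩ | ⟨i, j, -, -, rfl⟩
  · simp only [List.append_assoc] at hs
    have h1 := sublist_strip h01 _ (List.sublist_of_cons_sublist (sublist_strip h01.symm _ hs))
    have h2 := sublist_strip h01 _ (List.sublist_of_cons_sublist (sublist_strip h01.symm _
      (List.sublist_of_cons_sublist h1)))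
    have h3 := List.sublist_of_cons_sublist (sublist_strip h01.symm _
      (List.sublist_of_cons_sublist h2))
    rw [← List.append_nil (List.replicate n 1)] at h3
    simpa using sublist_strip h01 _ h3
  · simp only [List.append_assoc] at hs
    have h1 := sublist_strip h01 _ (List.sublist_of_cons_sublist (sublist_strip h01.symm _ hs))
    have h2 := List.sublist_of_cons_sublist (sublist_strip h01.symm _
      (List.sublist_of_cons_sublist h1))
    rw [← List.append_nil (List.replicate j 1)] at h2
    simpa using sublist_strip h01 _ h2

/-- The parse of a word of `L₂` is unique: in `aᵖ b^q a t ∈ L₂` the first two blocks have the same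
length `p = q`, and `a t` is either `aᵐ bᵐ aⁿ bⁿ`, with one of `p`, `m`, `n` in `H`, or `aᵐ bᵐ`. -/
theorem L2_first_blocks {H : Set ℕ} {p q : ℕ} {t : List (Fin 2)} (hq : 1 ≤ q)
    (h : List.replicate p 0 ++ (List.replicate q 1 ++ 0 :: t) ∈ L2 H) :
    p = q ∧ ((∃ m n, 1 ≤ m ∧ 1 ≤ n ∧ (p ∈ H ∨ m ∈ H ∨ n ∈ H) ∧ 0 :: t = List.replicate m 0 ++
      (List.replicate m 1 ++ (List.replicate n 0 ++ List.replicate n 1))) ∨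
      ∃ m, 1 ≤ m ∧ 0 :: t = List.replicate m 0 ++ List.replicate m 1) := by
  have h01 : (0 : Fin 2) ≠ 1 := by decide
  obtain ⟨q, rfl⟩ := Nat.exists_eq_add_of_le' hq
  rcases h with ⟨l, m, n, hl, hm, hn, hH, he⟩ | ⟨l, m, hl, hm, he⟩
  · obtain ⟨l, rfl⟩ := Nat.exists_eq_add_of_le' hl
    obtain ⟨m, rfl⟩ := Nat.exists_eq_add_of_le' hm
    simp only [List.append_assoc] at he
    rw [List.replicate_succ (n := q), List.replicate_succ (n := l) (a := (1 : Fin 2)),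
      List.cons_append, List.cons_append] at he
    obtain ⟨rfl, he'⟩ := run_inj h01 h01 he
    rw [List.cons.injEq, List.replicate_succ (n := m) (a := (0 : Fin 2)), List.cons_append] at he'
    obtain ⟨rfl, het⟩ := run_inj h01.symm h01.symm he'.2
    exact ⟨rfl, .inl ⟨m + 1, n, hm, hn, hH, by rw [het]; simp [List.replicate_succ]⟩⟩
  · obtain ⟨l, rfl⟩ := Nat.exists_eq_add_of_le' hl
    obtain ⟨m, rfl⟩ := Nat.exists_eq_add_of_le' hm
    simp only [List.append_assoc] at he
    rw [List.replicate_succ (n := q), List.replicate_succ (n := l) (a := (1 : Fin 2)),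
      List.cons_append, List.cons_append] at he
    obtain ⟨rfl, he'⟩ := run_inj h01 h01 he
    rw [List.cons.injEq, List.replicate_succ (n := m) (a := (0 : Fin 2)), List.cons_append] at he'
    obtain ⟨rfl, het⟩ := run_inj h01.symm h01.symm he'.2
    exact ⟨rfl, .inr ⟨m + 1, hm, by rw [het]; simp [List.replicate_succ]⟩⟩

theorem mem_of_tailWord {H : Set ℕ} (h3 : 3 ∉ H) {q : ℕ} (hq : 1 ≤ q)
    (h : List.replicate q 0 ++ (List.replicate q 1 ++ tailWord) ∈ L2 H) : q ∈ H := by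
  have h01 : (0 : Fin 2) ≠ 1 := by decide
  have htail : tailWord = 0 :: (List.replicate 2 0 ++ List.replicate 3 1 ++
    List.replicate 3 0 ++ List.replicate 3 1) := rfl
  rw [htail] at h
  obtain ⟨-, ⟨m, n, hm, hn, hH, he⟩ | ⟨m, hm, he⟩⟩ := L2_first_blocks hq h
  · obtain ⟨m, rfl⟩ := Nat.exists_eq_add_of_le' hm
    obtain ⟨n, rfl⟩ := Nat.exists_eq_add_of_le' hn
    have he' : List.replicate 3 (0 : Fin 2) ++ 1 :: (List.replicate 2 1 ++
        List.replicate 3 0 ++ List.replicate 3 1) = List.replicate (m + 1) 0 ++ 1 ::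
        (List.replicate m 1 ++ (List.replicate (n + 1) 0 ++ List.replicate (n + 1) 1)) := by
      simpa [List.replicate_succ] using he
    obtain ⟨hm3, -⟩ := run_inj h01 h01 he'
    have hlen := congrArg List.length he
    simp at hlen
    have hn3 : n + 1 = 3 := by omega
    rw [← hm3, hn3] at hH
    tauto
  · obtain ⟨m, rfl⟩ := Nat.exists_eq_add_of_le' hm
    have he' : List.replicate 3 (0 : Fin 2) ++ 1 :: (List.replicate 2 1 ++
        List.replicate 3 0 ++ List.replicate 3 1) = List.replicate (m + 1) 0 ++ 1 ::
        (List.replicate m 1) := by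
      simpa [List.replicate_succ] using he
    obtain ⟨hm3, -⟩ := run_inj h01 h01 he'
    have hlen := congrArg List.length he
    simp at hlen
    omega

theorem pow_two_no_progression {a b c j : ℕ} (hj : 1 ≤ j) (hab : 2 ^ a + j = 2 ^ b)
    (hbc : 2 ^ b + j = 2 ^ c) : False := by
  have h1 : a < b := (Nat.pow_lt_pow_iff_right (a := 2) (by norm_num)).1 (by omega)
  have h2 : b < c := (Nat.pow_lt_pow_iff_right (a := 2) (by norm_num)).1 (by omega)
  have h3 : 2 ^ (b + 1) ≤ 2 ^ c := Nat.pow_le_pow_right (by norm_num) h2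
  have h4 : 0 < 2 ^ a := by positivity
  rw [pow_succ] at h3
  omega

/-! ### Incompatibility of pumping with `L₂` -/

theorem sublist_of_mixed {y : List (Fin 2)} (h0 : 0 ∈ y) (h1 : 1 ∈ y) :
    [1, 0, 1, 0, 1, 0].Sublist (wordPow y 6) := by
  have h0' := List.singleton_sublist.2 h0
  have h1' := List.singleton_sublist.2 h1
  have := h1'.append (h0'.append (h1'.append (h0'.append (h1'.append h0'))))
  simpa [wordPow] using this

/-- The word `aˡ bˡ a³ b³ a³ b³` cannot be pumped inside `L₂` with the first pumped piece lying in
its first block. -/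
theorem no_pumping {H : Set ℕ} (hpow : H ⊆ {n | ∃ k : ℕ, n = 2 ^ k}) {l : ℕ} (hl : 1 ≤ l)
    {U v x y Z : List (Fin 2)} (hvy : v ++ y ≠ []) (hlen : U.length + v.length ≤ l)
    (hw : List.replicate l 0 ++ (List.replicate l 1 ++ tailWord) = U ++ (v ++ (x ++ (y ++ Z))))
    (hp : ∀ i, 1 ≤ i → U ++ (wordPow v i ++ (x ++ (wordPow y i ++ Z))) ∈ L2 H) : False := by
  have h3 : 3 ∉ H := by
    intro h
    obtain ⟨k, hk⟩ := hpow h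
    rcases k with _ | _ | k
    · simp at hk
    · simp at hk
    · rw [pow_succ] at hk
      omega
  -- `U` and `v` are powers of `a`
  obtain ⟨c, j, r, rfl, rfl, rfl, hw⟩ : ∃ c j r, U = List.replicate c 0 ∧
      v = List.replicate j 0 ∧ l = c + j + r ∧
      List.replicate r 0 ++ (List.replicate l 1 ++ tailWord) = x ++ (y ++ Z) := by
    rw [← List.append_assoc U] at hw
    obtain ⟨t, ht, ht'⟩ | ⟨t, ht, ht'⟩ := List.append_eq_append_iff.1 hw
    · have hl' := congrArg List.length ht
      simp at hl'
      have : t = [] := List.eq_nil_of_length_eq_zero (by omega)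
      subst this
      have hall : ∀ b ∈ U ++ v, b = 0 := fun b hb => by
        rw [ht, List.append_nil] at hb
        exact List.eq_of_mem_replicate hb
      refine ⟨U.length, v.length, 0,
        List.eq_replicate_iff.2 ⟨rfl, fun b hb => hall b (by simp [hb])⟩,
        List.eq_replicate_iff.2 ⟨rfl, fun b hb => hall b (by simp [hb])⟩, by omega, ?_⟩
      simpa using ht'
    · have hall : ∀ b ∈ U ++ v ++ t, b = 0 := fun b hb => by
        rw [← ht] at hb
        exact List.eq_of_mem_replicate hb
      have hl' := congrArg List.length ht
      simp at hl'
      refine ⟨U.length, v.length, t.length,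
        List.eq_replicate_iff.2 ⟨rfl, fun b hb => hall b (by simp [hb])⟩,
        List.eq_replicate_iff.2 ⟨rfl, fun b hb => hall b (by simp [hb])⟩, by omega, ?_⟩
      rw [ht', ← List.eq_replicate_iff.2 ⟨rfl, fun b hb => hall b (by simp [hb])⟩]
  have hc1 := L2_count (hp 1 le_rfl)
  have hc2 := L2_count (hp 2 (by norm_num))
  simp [wordPow, List.count_replicate] at hc1 hc2
  have h0 : 0 ∉ y := by
    intro h0
    by_cases h1 : 1 ∈ y
    · refine L2_not_sublist (hp 6 (by norm_num)) ((sublist_of_mixed h0 h1).trans ?_)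
      refine .trans ?_ (List.sublist_append_right _ _)
      refine .trans ?_ (List.sublist_append_right _ _)
      refine .trans ?_ (List.sublist_append_right _ _)
      exact List.sublist_append_left _ _
    · have e1 := List.count_eq_zero.2 h1
      have e0 := List.count_pos_iff.2 h0
      omega
  obtain ⟨k, rfl⟩ : ∃ k, y = List.replicate k 1 := by
    refine ⟨y.length, List.eq_replicate_iff.2 ⟨rfl, fun b hb => ?_⟩⟩
    fin_cases b
    · exact absurd hb h0
    · rfl
  simp [List.count_replicate] at hc1 hc2
  obtain rfl : k = j := by omega
  have hk : 1 ≤ k := by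
    rcases k with _ | k
    · simp at hvy
    · omega
  set l := c + k + r with hldef
  -- the factor `x` contains the rest of the first block
  obtain ⟨x, rfl, hx⟩ : ∃ x', x = List.replicate r 0 ++ x' ∧
      List.replicate l 1 ++ tailWord = x' ++ (List.replicate k 1 ++ Z) := by
    obtain ⟨t, ht, ht'⟩ | ⟨t, ht, ht'⟩ := List.append_eq_append_iff.1 hw
    · exact ⟨t, ht, ht'⟩
    · rcases t with _ | ⟨b, t⟩
      · exact ⟨[], by simpa using ht.symm, by simpa using ht'.symm⟩
      · exfalso
        have hb0 : b = 0 := List.eq_of_mem_replicate (n := r) (by rw [ht]; simp)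
        obtain ⟨k, rfl⟩ := Nat.exists_eq_add_of_le' hk
        simp [List.replicate_succ, hb0] at ht'
  have hrep : ∀ i, wordPow (List.replicate k (0 : Fin 2)) i = List.replicate (i * k) 0 ∧
      wordPow (List.replicate k (1 : Fin 2)) i = List.replicate (i * k) 1 := by
    intro i
    induction i with
    | zero => simp [wordPow]
    | succ i ih => simp [wordPow, ih, add_mul, add_comm]
  have hp' : ∀ i, List.replicate (l + i * k) 0 ++
      (x ++ (List.replicate (i * k) 1 ++ (List.replicate k 1 ++ Z))) ∈ L2 H := by
    intro i
    have := hp (i + 1) (by omega)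
    rw [(hrep _).1, (hrep _).2] at this
    have e1 : l + i * k = c + ((i + 1) * k + r) := by rw [hldef]; ring
    have e2 : (i + 1) * k = i * k + k := by ring
    rw [e1, List.replicate_add, List.replicate_add]
    rw [show List.replicate ((i + 1) * k) (1 : Fin 2) = List.replicate (i * k) 1 ++
      List.replicate k 1 by rw [e2, List.replicate_add]] at this
    simpa only [List.append_assoc] using this
  -- either `y` lies in the first block of `b`s, or it lies to the right of that block
  have hcases : (∃ s e, s + k + e = l ∧ x = List.replicate s 1 ∧
      Z = List.replicate e 1 ++ tailWord) ∨
      ∃ t, x = List.replicate l 1 ++ 0 :: t := by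
    rw [← List.append_assoc x] at hx
    obtain ⟨t, ht, hZ⟩ | ⟨t, ht, hZ⟩ := List.append_eq_append_iff.1 hx
    · rcases t with _ | ⟨b, t⟩
      · left
        rw [List.append_nil] at ht
        have hl' := congrArg List.length ht
        simp at hl'
        refine ⟨x.length, 0, by omega, List.eq_replicate_iff.2 ⟨rfl, fun b hb => ?_⟩, ?_⟩
        · exact List.eq_of_mem_replicate (n := l) (by rw [← ht]; simp [hb])
        · simpa using hZ.symm
      · right
        have hb : b = 0 := by
          simp [tailWord, List.replicate_succ] at hZ
          exact hZ.1.symm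
        subst hb
        obtain ⟨s, hs, hs'⟩ | ⟨s, hs, hs'⟩ := List.append_eq_append_iff.1 ht
        · have : (0 : Fin 2) = 1 := List.eq_of_mem_replicate (n := k) (by rw [hs']; simp)
          simp at this
        · rcases s with _ | ⟨b, s⟩
          · have : (0 : Fin 2) = 1 := List.eq_of_mem_replicate (n := k) (by
              rw [List.nil_append] at hs'
              rw [← hs']
              simp)
            simp at this
          · rw [List.cons_append, List.cons.injEq] at hs'
            exact ⟨s, by rw [hs, hs'.1]⟩
    · left
      have hl' := congrArg List.length ht
      simp at hl'
      have hall : ∀ b ∈ x ++ List.replicate k 1 ++ t, b = 1 := fun b hb => by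
        rw [← ht] at hb
        exact List.eq_of_mem_replicate hb
      refine ⟨x.length, t.length, by omega,
        List.eq_replicate_iff.2 ⟨rfl, fun b hb => hall b (by simp [hb])⟩, ?_⟩
      rw [hZ, ← List.eq_replicate_iff.2 ⟨rfl, fun b hb => hall b (by simp [hb])⟩]
  rcases hcases with ⟨s, e, hse, rfl, rfl⟩ | ⟨t, rfl⟩
  · have hmem : ∀ i, l + i * k ∈ H := by
      intro i
      refine mem_of_tailWord h3 (by omega) ?_
      have := hp' i
      have e1 : l + i * k = s + (i * k + (k + e)) := by omega
      rw [show List.replicate (l + i * k) (1 : Fin 2) = List.replicate s 1 ++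
        (List.replicate (i * k) 1 ++ (List.replicate k 1 ++ List.replicate e 1)) by
          rw [e1]; simp only [List.replicate_add]]
      simpa only [List.append_assoc] using this
    obtain ⟨a, ha⟩ := hpow (hmem 0)
    obtain ⟨b, hb⟩ := hpow (hmem 1)
    obtain ⟨d, hd⟩ := hpow (hmem 2)
    exact pow_two_no_progression hk (a := a) (b := b) (c := d) (by omega) (by omega)
  · have := hp' 1
    rw [List.append_assoc, List.cons_append] at this
    have := (L2_first_blocks hl this).1
    omega

/-- If `H` is an infinite set of powers of two, then `L₂` is not `3`-linear
(Example 14). -/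
theorem L2_not_3linear (H : Set ℕ) (hinf : H.Infinite)
    (hpow : H ⊆ {n | ∃ k : ℕ, n = 2 ^ k}) :
    ¬ IsKLinearLang 3 (L2 H) := by
  rintro ⟨G, hG⟩
  obtain ⟨K, hK⟩ := exists_pumping_bound G.rules
  obtain ⟨l, hlH, hl⟩ := hinf.exists_gt (3 * K)
  have hw : List.replicate l 0 ++ (List.replicate l 1 ++ tailWord) ∈ L2 H :=
    .inl ⟨l, 3, 3, by omega, by norm_num, by norm_num, .inl hlH, by simp [tailWord]⟩
  have hne : List.replicate l (0 : Fin 2) ++ (List.replicate l 1 ++ tailWord) ≠ [] := by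
    simp [tailWord]
  obtain ⟨ps, hps, hd⟩ := (hG _ hne).1 hw
  have hlang : ∀ p q r, LinDerives G.rules (G.heads 0) p → LinDerives G.rules (G.heads 1) q →
      LinDerives G.rules (G.heads 2) r → p ++ (q ++ r) ≠ [] → p ++ (q ++ r) ∈ L2 H := by
    intro p q r h0 h1 h2 hn
    refine (hG _ hn).2 ⟨![p, q, r], by simp [List.ofFn_succ], fun i => ?_⟩
    fin_cases i
    · exact h0
    · exact h1
    · exact h2
  have hps' : List.replicate l 0 ++ (List.replicate l 1 ++ tailWord) =
      ps 0 ++ (ps 1 ++ ps 2) := by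
    simpa [List.ofFn_succ] using hps
  have hlen := congrArg List.length hps'
  simp at hlen
  -- pump the first factor `ps i` longer than `K`, with `pre` and `post` the factors around it
  have key : ∀ (pre post : List (Fin 2)) (i : Fin 3), pre.length ≤ 2 * K → K < (ps i).length →
      List.replicate l 0 ++ (List.replicate l 1 ++ tailWord) = pre ++ (ps i ++ post) →
      (∀ p, LinDerives G.rules (G.heads i) p → pre ++ (p ++ post) ≠ [] →
        pre ++ (p ++ post) ∈ L2 H) → False := by
    intro pre post i hpre hi he hmem
    obtain ⟨u, v, x, y, z, huv, hvy, hpi, hpump⟩ := hK _ _ (hd i) hi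
    refine no_pumping hpow (l := l) (by omega) (U := pre ++ u) (v := v) (x := x) (y := y)
      (Z := z ++ post) hvy (by simp only [List.length_append]; omega)
      (by rw [he, hpi]; simp) (fun n hn => ?_)
    have := hmem _ (hpump n) ?_
    · simpa using this
    · obtain ⟨n, rfl⟩ := Nat.exists_eq_add_of_le' hn
      intro h
      apply hvy
      simp [wordPow] at h
      simp [h]
  by_cases h0 : K < (ps 0).length
  · exact key [] (ps 1 ++ ps 2) 0 (by simp) h0 (by simpa using hps')
      fun p hp hn => hlang p _ _ hp (hd 1) (hd 2) hn
  by_cases h1 : K < (ps 1).length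
  · exact key (ps 0) (ps 2) 1 (by omega) h1 hps'
      fun p hp hn => hlang _ p _ (hd 0) hp (hd 2) hn
  · refine key (ps 0 ++ ps 1) [] 2 (by simp only [List.length_append]; omega) (by omega)
      (by simpa using hps') fun p hp hn => ?_
    simpa using hlang _ _ p (hd 0) (hd 1) hp (by simpa using hn)
end

section
/- Let H be an infinite subset of { 2^k : k ∈ ℕ }, and let L₂ = { a^l b^l a^m b^m a^n b^n : l, m, n ≥ 1, and (l ∈ H or m ∈ H or n ∈ H) } ∪ { a^i b^i a^j b^j : i, j ≥ 1 } over the alphabet {a, b}. Then L₂ is not context-free. -/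
/-- `Yields g n s w`: the sentential form `s` derives the terminal word `w` in the grammar `g` by
a forest of parse trees (one for each symbol of `s`) with `n` internal nodes in total. -/
inductive Yields {T : Type} (g : ContextFreeGrammar T) :
    ℕ → List (Symbol T g.NT) → List T → Prop
  | nil : Yields g 0 [] []
  | term {n : ℕ} {s : List (Symbol T g.NT)} {w : List T} (a : T) (h : Yields g n s w) :
      Yields g n (Symbol.terminal a :: s) (a :: w)
  | node {m n : ℕ} {s : List (Symbol T g.NT)} {x w : List T}
      (r : ContextFreeRule T g.NT) (hr : r ∈ g.rules)
      (hx : Yields g m r.output x) (h : Yields g n s w) :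
      Yields g (m + n + 1) (Symbol.nonterminal r.input :: s) (x ++ w)

section Pumping

variable {T : Type} {g : ContextFreeGrammar T}

theorem Yields.split {s₁ s₂ : List (Symbol T g.NT)} {n : ℕ} {w : List T}
    (h : Yields g n (s₁ ++ s₂) w) :
    ∃ n₁ n₂ w₁ w₂, w = w₁ ++ w₂ ∧ Yields g n₁ s₁ w₁ ∧ Yields g n₂ s₂ w₂ := by
  induction s₁ generalizing n w with
  | nil => exact ⟨0, n, [], w, rfl, .nil, h⟩
  | cons c s ih =>
    rw [List.cons_append] at h
    cases h with
    | term a h =>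
      obtain ⟨n₁, n₂, w₁, w₂, rfl, h₁, h₂⟩ := ih h
      exact ⟨_, _, a :: w₁, w₂, rfl, .term a h₁, h₂⟩
    | node r hr hx h =>
      obtain ⟨n₁, n₂, w₁, w₂, rfl, h₁, h₂⟩ := ih h
      exact ⟨_, _, _, w₂, (List.append_assoc _ _ _).symm, .node r hr hx h₁, h₂⟩

theorem Yields.of_rewrites {r : ContextFreeRule T g.NT} (hr : r ∈ g.rules)
    {s s' : List (Symbol T g.NT)} (h : r.Rewrites s s') {n : ℕ} {w : List T}
    (hw : Yields g n s' w) : ∃ m, Yields g m s w := by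
  induction h generalizing n w with
  | head s =>
    obtain ⟨n₁, n₂, w₁, w₂, rfl, h₁, h₂⟩ := hw.split
    exact ⟨_, .node r hr h₁ h₂⟩
  | cons c _ ih =>
    cases hw with
    | term a h =>
      obtain ⟨m, hm⟩ := ih h
      exact ⟨_, .term a hm⟩
    | node r' hr' hx h =>
      obtain ⟨m, hm⟩ := ih h
      exact ⟨_, .node r' hr' hx hm⟩

theorem Yields.of_derives {s : List (Symbol T g.NT)} {w : List T}
    (h : g.Derives s (w.map Symbol.terminal)) : ∃ n, Yields g n s w := by
  induction h using Relation.ReflTransGen.head_induction_on with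
  | refl =>
    refine ⟨0, ?_⟩
    induction w with
    | nil => exact .nil
    | cons a w ih => exact .term a ih
  | head h _ ih =>
    obtain ⟨n, hn⟩ := ih
    obtain ⟨r, hr, hrw⟩ := h
    exact Yields.of_rewrites hr hrw hn

theorem derives_output {r : ContextFreeRule T g.NT} (hr : r ∈ g.rules) :
    g.Derives [Symbol.nonterminal r.input] r.output :=
  ContextFreeGrammar.Produces.single ⟨r, hr, .input_output⟩

theorem Yields.derives {n : ℕ} {s : List (Symbol T g.NT)} {w : List T} (h : Yields g n s w) :
    g.Derives s (w.map Symbol.terminal) := by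
  induction h with
  | nil => exact .refl _
  | term a _ ih => exact ih.append_left [Symbol.terminal a]
  | node r hr _ _ ihx ih =>
    rw [List.map_append]
    exact (((derives_output hr).trans ihx).append_right _).trans (ih.append_left _)

/-- `Ctx g A u B z`: the nonterminal `A` derives `u B z`, with `u` and `z` terminal words. -/
def Ctx (g : ContextFreeGrammar T) (A : g.NT) (u : List T) (B : g.NT) (z : List T) : Prop :=
  g.Derives [Symbol.nonterminal A]
    (u.map Symbol.terminal ++ [Symbol.nonterminal B] ++ z.map Symbol.terminal)

theorem Ctx.refl (A : g.NT) : Ctx g A [] A [] := by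
  simp [Ctx, ContextFreeGrammar.Derives.refl]

theorem Ctx.fill {A B : g.NT} {u z x : List T} (h : Ctx g A u B z)
    (hx : g.Derives [Symbol.nonterminal B] (x.map Symbol.terminal)) :
    g.Derives [Symbol.nonterminal A] ((u ++ x ++ z).map Symbol.terminal) := by
  rw [List.map_append, List.map_append]
  exact ContextFreeGrammar.Derives.trans h ((hx.append_left _).append_right _)

theorem Ctx.trans {A B C : g.NT} {u z v y : List T} (h : Ctx g A u B z) (h' : Ctx g B v C y) :
    Ctx g A (u ++ v) C (y ++ z) := by
  have := ContextFreeGrammar.Derives.trans h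
    ((ContextFreeGrammar.Derives.append_left h' (u.map Symbol.terminal)).append_right
      (z.map Symbol.terminal))
  simpa [Ctx, List.append_assoc] using this

/-- A forest with a yield longer than `c` times its number of roots has a tree with nonterminal
root whose yield is longer than `c`. -/
theorem Yields.exists_large_tree {c : ℕ} (hc : 1 ≤ c) {n : ℕ} {s : List (Symbol T g.NT)}
    {w : List T} (h : Yields g n s w) (hw : s.length * c < w.length) :
    ∃ (r : ContextFreeRule T g.NT) (m : ℕ) (u x z : List T), r ∈ g.rules ∧ m < n ∧
      w = u ++ x ++ z ∧ Yields g m r.output x ∧ c < x.length ∧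
      g.Derives s (u.map Symbol.terminal ++ [Symbol.nonterminal r.input] ++
        z.map Symbol.terminal) := by
  induction h with
  | nil => simp at hw
  | term a _ ih =>
    simp only [List.length_cons, Nat.add_mul] at hw
    obtain ⟨r, m, u, x, z, hr, hm, rfl, hx, hcx, hd⟩ := ih (by omega)
    exact ⟨r, m, a :: u, x, z, hr, hm, rfl, hx, hcx, hd.append_left [Symbol.terminal a]⟩
  | @node k l s x w r hr hx hs _ ih =>
    by_cases hcx : c < x.length
    · exact ⟨r, k, [], x, w, hr, by omega, by simp, hx, hcx,
        hs.derives.append_left [Symbol.nonterminal r.input]⟩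
    · simp only [List.length_cons, List.length_append, Nat.add_mul] at hw
      obtain ⟨r', m, u, x', z, hr', hm, rfl, hx', hcx', hd⟩ := ih (by omega)
      refine ⟨r', m, x ++ u, x', z, hr', by omega, by simp, hx', hcx', ?_⟩
      have h1 := ((derives_output hr).trans hx.derives).append_right s
      have h2 := hd.append_left (x.map Symbol.terminal)
      simpa [List.append_assoc] using ContextFreeGrammar.Derives.trans h1 h2

/-- A tree with a yield longer than `b * c`, where `b` bounds the lengths of right-hand sides, has
a subtree with a strictly shorter yield that is still longer than `c`. -/
theorem exists_child {b c : ℕ} (hc : 1 ≤ c) (hb : ∀ r ∈ g.rules, r.output.length ≤ b)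
    (n : ℕ) {r : ContextFreeRule T g.NT} (hr : r ∈ g.rules) {w : List T}
    (h : Yields g n r.output w) (hw : b * c < w.length) :
    ∃ (r' : ContextFreeRule T g.NT) (m : ℕ) (u x z : List T), r' ∈ g.rules ∧
      w = u ++ x ++ z ∧ Yields g m r'.output x ∧ c < x.length ∧ x.length < w.length ∧
      Ctx g r.input u r'.input z := by
  induction n using Nat.strong_induction_on generalizing r w with
  | _ n ih =>
    obtain ⟨r', m, u, x, z, hr', hm, rfl, hx, hcx, hd⟩ :=
      h.exists_large_tree hc ((Nat.mul_le_mul_right c (hb r hr)).trans_lt hw)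
    have hctx : Ctx g r.input u r'.input z := (derives_output hr).trans hd
    by_cases hlt : x.length < (u ++ x ++ z).length
    · exact ⟨r', m, u, x, z, hr', rfl, hx, hcx, hlt, hctx⟩
    -- Otherwise the selected child carries the whole yield, so the descent continues below it.
    · simp only [List.length_append, not_lt] at hlt
      obtain rfl : u = [] := List.length_eq_zero_iff.mp (by omega)
      obtain rfl : z = [] := List.length_eq_zero_iff.mp (by omega)
      obtain ⟨r'', m', u', x', z', hr'', hw', hx', hcx', hlt', hctx'⟩ :=
        ih m hm hr' hx (by simpa using hw)
      exact ⟨r'', m', u', x', z', hr'', by simpa using hw', hx', hcx', by simpa using hlt',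
        by simpa using hctx.trans hctx'⟩

/-- `Below g p q`: the parse tree with root rule `p.1` and yield `p.2` can be chosen to have a
subtree with root rule `q.1` and yield `q.2`. -/
def Below (g : ContextFreeGrammar T) (p q : ContextFreeRule T g.NT × List T) : Prop :=
  ∃ u z, p.2 = u ++ q.2 ++ z ∧ Ctx g p.1.input u q.1.input z

theorem Below.refl (p : ContextFreeRule T g.NT × List T) : Below g p p :=
  ⟨[], [], by simp, Ctx.refl _⟩

theorem Below.trans {p q s : ContextFreeRule T g.NT × List T} (h : Below g p q)
    (h' : Below g q s) : Below g p s := by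
  obtain ⟨u, z, hw, hc⟩ := h
  obtain ⟨v, y, hw', hc'⟩ := h'
  exact ⟨u ++ v, y ++ z, by simp [hw, hw'], hc.trans hc'⟩

/-- Iterating `exists_child`: a tree with a yield longer than `b ^ n` contains a descending path of
`n` steps along which the yields become strictly shorter. -/
theorem exists_chain {b : ℕ} (hb1 : 1 ≤ b) (hb : ∀ r ∈ g.rules, r.output.length ≤ b) (n : ℕ)
    {r : ContextFreeRule T g.NT} (hr : r ∈ g.rules) {w : List T} {k : ℕ}
    (h : Yields g k r.output w) (hw : b ^ n < w.length) :
    ∃ f : ℕ → ContextFreeRule T g.NT × List T, f 0 = (r, w) ∧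
      (∀ i ≤ n, (f i).1 ∈ g.rules ∧ ∃ m, Yields g m (f i).1.output (f i).2) ∧
      ∀ i < n, Below g (f i) (f (i + 1)) ∧ (f (i + 1)).2.length < (f i).2.length := by
  induction n generalizing r w k with
  | zero =>
    refine ⟨fun _ => (r, w), rfl, fun i _ => ⟨hr, k, h⟩, fun i hi => absurd hi (by omega)⟩
  | succ n ih =>
    obtain ⟨r', m, u, x, z, hr', hw', hx, hcx, hlt, hctx⟩ :=
      exists_child (Nat.one_le_pow n b hb1) hb k hr h (by rwa [← Nat.pow_succ'])
    obtain ⟨f, hf0, hf1, hf2⟩ := ih hr' hx hcx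
    refine ⟨fun i => Nat.casesOn i (r, w) f, rfl, ?_, ?_⟩
    · rintro (_ | i) hi
      · exact ⟨hr, k, h⟩
      · exact hf1 i (by omega)
    · rintro (_ | i) hi
      · change Below g (r, w) (f 0) ∧ (f 0).2.length < w.length
        rw [hf0]
        exact ⟨⟨u, z, hw', hctx⟩, hlt⟩
      · exact hf2 i (by omega)

theorem chain_lt {f : ℕ → ContextFreeRule T g.NT × List T} {n : ℕ}
    (hf : ∀ i < n, Below g (f i) (f (i + 1)) ∧ (f (i + 1)).2.length < (f i).2.length)
    {i j : ℕ} (hij : i ≤ j) (hj : j ≤ n) :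
    Below g (f i) (f j) ∧ (f j).2.length + (j - i) ≤ (f i).2.length := by
  induction j, hij using Nat.le_induction with
  | base => exact ⟨Below.refl _, by omega⟩
  | succ j hij ih =>
    obtain ⟨h1, h2⟩ := ih (by omega)
    obtain ⟨h3, h4⟩ := hf j (by omega)
    exact ⟨h1.trans h3, by omega⟩

theorem take_context {k : ℕ} {x x' : List T} (h : x.take k = x'.take k) (u z : List T) :
    (u ++ x ++ z).take k = (u ++ x' ++ z).take k := by
  have key : ∀ (l : ℕ), l ≤ k → (x ++ z).take l = (x' ++ z).take l := by
    intro l hl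
    have hlx : x.take l = x'.take l := by
      simpa [List.take_take, Nat.min_eq_left hl] using congrArg (List.take l) h
    have hlen := congrArg List.length h
    simp only [List.length_take] at hlen
    rw [List.take_append, List.take_append, hlx]
    -- Either both words reach length `l`, or they have equal length.
    rcases Nat.lt_or_ge x.length l with hx | hx
    · rw [show x'.length = x.length by omega]
    · rw [show l - x.length = 0 by omega, show l - x'.length = 0 by omega]
  rw [List.append_assoc, List.append_assoc, List.take_append,
    key _ (Nat.sub_le _ _), ← List.take_append]

/-- A pumping lemma that preserves the first `k` letters. -/
theorem exists_pump [Finite T] (g : ContextFreeGrammar T) (k : ℕ) :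
    ∃ N : ℕ, ∀ w ∈ g.language, N < w.length → ∃ u v x y z : List T,
      w = u ++ (v ++ x ++ y) ++ z ∧ 0 < v.length + y.length ∧
      u ++ x ++ z ∈ g.language ∧ u ++ (v ++ (v ++ x ++ y) ++ y) ++ z ∈ g.language ∧
      (u ++ x ++ z).take k = w.take k ∧
      (u ++ (v ++ (v ++ x ++ y) ++ y) ++ z).take k = w.take k := by
  classical
  obtain ⟨b, hb1, hb⟩ : ∃ b, 1 ≤ b ∧ ∀ r ∈ g.rules, r.output.length ≤ b :=
    ⟨g.rules.sup (fun r => r.output.length) + 1, by omega, fun r hr =>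
      (Finset.le_sup (f := fun r : ContextFreeRule T g.NT => r.output.length) hr).trans
        (Nat.le_succ _)⟩
  let P : Finset (List T) := (List.finite_length_le T k).toFinset
  let K : Finset (ContextFreeRule T g.NT × List T) := g.rules ×ˢ P
  refine ⟨b ^ K.card, fun w hw hlen => ?_⟩
  obtain ⟨n, hY⟩ := Yields.of_derives ((g.mem_language_iff w).mp hw)
  obtain ⟨r, hr, hri, m, hY⟩ : ∃ r ∈ g.rules, r.input = g.initial ∧
      ∃ m, Yields g m r.output w := by
    generalize hs : [Symbol.nonterminal g.initial] = s at hY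
    cases hY with
    | nil => simp at hs
    | term a h => simp at hs
    | node r hr hx h =>
      simp only [List.cons.injEq, Symbol.nonterminal.injEq] at hs
      obtain ⟨hs1, rfl⟩ := hs
      cases h
      exact ⟨r, hr, hs1.symm, _, by simpa using hx⟩
  obtain ⟨f, hf0, hf1, hf2⟩ := exists_chain hb1 hb K.card hr hY hlen
  obtain ⟨i, j, hij, hj, hkey⟩ : ∃ i j, i < j ∧ j ≤ K.card ∧
      ((f i).1, (f i).2.take k) = ((f j).1, (f j).2.take k) := by
    obtain ⟨i, hi, j, hj, hne, he⟩ := Finset.exists_ne_map_eq_of_card_lt_of_maps_to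
      (s := Finset.range (K.card + 1)) (t := K) (by simp)
      (f := fun i => ((f i).1, (f i).2.take k)) (by
        intro i hi
        have hi' : i ≤ K.card := by simpa [Nat.lt_succ_iff] using hi
        simp only [K, P, Finset.coe_product, Set.mem_prod, Finset.mem_coe,
          Set.Finite.mem_toFinset, Set.mem_ofPred_eq]
        exact ⟨(hf1 i hi').1, by simp⟩)
    simp only [Finset.mem_range] at hi hj
    rcases lt_or_gt_of_ne hne with h | h
    · exact ⟨i, j, h, by omega, he⟩
    · exact ⟨j, i, h, by omega, he.symm⟩
  obtain ⟨⟨u, z, hw1, hc1⟩, -⟩ := chain_lt hf2 (Nat.zero_le i) (hij.le.trans hj)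
  obtain ⟨⟨v, y, hw2, hc2⟩, hlt⟩ := chain_lt hf2 hij.le hj
  obtain ⟨hkr, hkt⟩ := Prod.mk.inj hkey
  rw [hf0] at hw1 hc1
  simp only [hri] at hw1 hc1
  obtain ⟨-, m', hYj⟩ := hf1 j hj
  have hd : g.Derives [Symbol.nonterminal (f j).1.input] ((f j).2.map Symbol.terminal) :=
    (derives_output (hf1 j hj).1).trans hYj.derives
  rw [hkr] at hc1 hc2
  rw [hw2] at hw1 hkt hlt
  refine ⟨u, v, (f j).2, y, z, hw1, ?_, hc1.fill hd, hc1.fill (hc2.fill (hc2.fill hd)), ?_, ?_⟩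
  · simp only [List.length_append] at hlt
    omega
  · rw [hw1]
    exact take_context hkt.symm u z
  · rw [hw1]
    exact take_context (take_context hkt v y) u z

end Pumping

/-- There is no three-term arithmetic progression of powers of two: `2 ^ (y + 1) - 2 ^ x` lies
strictly between `2 ^ y` and `2 ^ (y + 1)` for `x < y`. -/
theorem no_three_term {x y z : ℕ} (h1 : 2 ^ x < 2 ^ y) (h2 : 2 ^ x + 2 ^ z = 2 * 2 ^ y) :
    False := by
  have hx : 0 < 2 ^ x := by positivity
  have hy : y < z := (Nat.pow_lt_pow_iff_right (le_refl 2)).mp (by omega)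
  have := Nat.pow_le_pow_right (n := 2) (by norm_num) hy
  rw [Nat.succ_eq_add_one, pow_succ] at this
  omega

theorem length_of_take_eq {H : Set ℕ} (h3 : 3 ∉ H) {p : List (Fin 2)} (hp : p ∈ L2 H)
    (ht : p.take 13 = [0, 0, 0, 1, 1, 1, 0, 0, 0, 1, 1, 1, 0]) :
    ∃ n ∈ H, p.length = 12 + 2 * n := by
  -- The length of a block is read off from the letter following it.
  have block : ∀ (l : ℕ) (c d : Fin 2) (t s : List (Fin 2)) (k : ℕ), c ≠ d → 1 ≤ l →
      (List.replicate l c ++ List.replicate l d ++ t).take (6 + k) =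
        c :: c :: c :: d :: d :: d :: s → l = 3 := by
    intro l c d t s k hcd hl h
    rcases l with _ | _ | _ | _ | l
    · omega
    all_goals simp [List.replicate_succ, Nat.add_comm 6 k, hcd, hcd.symm] at h ⊢
  rcases hp with ⟨l, m, n, hl, hm, hn, hH, rfl⟩ | ⟨i, j, hi, hj, rfl⟩
  · simp only [List.append_assoc] at ht
    rw [← List.append_assoc] at ht
    obtain rfl := block l 0 1 _ _ 7 (by decide) hl ht
    simp only [List.replicate_succ, List.replicate_zero, List.cons_append, List.nil_append,
      List.take_succ_cons, List.cons.injEq, true_and] at ht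
    rw [← List.append_assoc] at ht
    obtain rfl := block m 0 1 _ _ 1 (by decide) hm ht
    refine ⟨n, by tauto, ?_⟩
    simp only [List.length_append, List.length_replicate]
    omega
  · simp only [List.append_assoc] at ht
    rw [← List.append_assoc] at ht
    obtain rfl := block i 0 1 _ _ 7 (by decide) hi ht
    simp only [List.replicate_succ, List.replicate_zero, List.cons_append, List.nil_append,
      List.take_succ_cons, List.cons.injEq, true_and] at ht
    rw [← List.append_nil (List.replicate j 0 ++ List.replicate j 1)] at ht
    obtain rfl := block j 0 1 _ _ 1 (by decide) hj ht
    simp [List.replicate_succ] at ht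

/-- If `H` is an infinite set of powers of two, then `L₂` is not context-free
(Example 14). -/
theorem L2_not_contextFree (H : Set ℕ) (hinf : H.Infinite)
    (hpow : H ⊆ {n | ∃ k : ℕ, n = 2 ^ k}) :
    ¬ Language.IsContextFree (T := Fin 2) (L2 H) := by
  rintro ⟨g, hg⟩
  have h3 : 3 ∉ H := by
    intro h
    obtain ⟨k, hk⟩ := hpow h
    rcases k with _ | _ | k
    · simp at hk
    · simp at hk
    · rw [pow_succ] at hk
      omega
  obtain ⟨N, hN⟩ := exists_pump g 13
  obtain ⟨h, hH, hlarge⟩ := hinf.exists_gt N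
  have hmem : ∀ p, p ∈ g.language → p ∈ L2 H := fun p hp => by rw [hg] at hp; exact hp
  have hwL : List.replicate 3 0 ++ List.replicate 3 1 ++ List.replicate 3 0 ++
      List.replicate 3 1 ++ List.replicate h 0 ++ List.replicate h 1 ∈ g.language := by
    rw [hg]
    exact Or.inl ⟨3, 3, h, by norm_num, by norm_num, by omega, by tauto, rfl⟩
  obtain ⟨u, v, x, y, z, hw, hpos, hm0, hm2, ht0, ht2⟩ := hN _ hwL (by simp; omega)
  have ht1 : (List.replicate 3 (0 : Fin 2) ++ List.replicate 3 1 ++ List.replicate 3 0 ++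
      List.replicate 3 1 ++ List.replicate h 0 ++ List.replicate h 1).take 13 =
      ([0, 0, 0, 1, 1, 1, 0, 0, 0, 1, 1, 1, 0] : List (Fin 2)) := by
    obtain ⟨h, rfl⟩ : ∃ h', h = h' + 1 := ⟨h - 1, by omega⟩
    simp [List.replicate_succ]
  obtain ⟨n₀, hn₀, hl₀⟩ := length_of_take_eq h3 (hmem _ hm0) (ht0.trans ht1)
  obtain ⟨n₁, hn₁, hl₁⟩ := length_of_take_eq h3 (hmem _ hwL) ht1
  obtain ⟨n₂, hn₂, hl₂⟩ := length_of_take_eq h3 (hmem _ hm2) (ht2.trans ht1)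
  rw [hw] at hl₁
  simp only [List.length_append] at hl₀ hl₁ hl₂
  obtain ⟨k₀, rfl⟩ := hpow hn₀
  obtain ⟨k₁, rfl⟩ := hpow hn₁
  obtain ⟨k₂, rfl⟩ := hpow hn₂
  exact no_three_term (x := k₀) (y := k₁) (z := k₂) (by omega) (by omega)
end
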